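/- Lipschitz continuity of the penalty-featured cost V on the whole feasible set: Fix α ≥ 0, λ : I → [0,∞), c : J × I → (0,∞), ρ₀ ∈ (0,1), and let F_α be the tangent-line extension of u_α at ρ₀ (F_α(x) = u_α(x) for x ≤ ρ₀ and F_α(x) = u_α(ρ₀) + (1−ρ₀)^{−α}·(x − ρ₀) for x > ρ₀). Define V(π) = Σ_{j∈J} F_α(ρ_j(π)). Then for all π, π' ∈ Ω' (with no load constraint), |V(π) − V(π')| ≤ (1−ρ₀)^{−α} · ( max_{j∈J, i∈I} λ(i)/c(j,i) ) · ‖π − π'‖₁. -/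

import Mathlib

open Finset Real

/-!
On `(-∞, 1)` the utility `u_α` has derivative `(1 - x) ^ (-α)`, which is positive and nondecreasing
because `α ≥ 0`; hence on `(-∞, ρ₀]` it is bounded by `K = (1 - ρ₀) ^ (-α)`, and `u_α` is
`K`-Lipschitz there (`utility_lipschitz`). The tangent line has slope exactly `K` and agrees with
`u_α` at `ρ₀`, so the extension is `K`-Lipschitz on all of `ℝ` (`lipschitz_glue_line`). Summing over
the access points and bounding each load difference `|ρ_j(π) - ρ_j(π')|` by
`max (λ/c) * ∑ i, |π(i,j) - π'(i,j)|` gives the claim.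
-/

lemma utility_hasDerivAt (α x : ℝ) (hx : x < 1) :
    HasDerivAt (fun x : ℝ => if α = 1 then -Real.log (1 - x) else (1 - x) ^ (1 - α) / (α - 1))
      ((1 - x) ^ (-α)) x := by
  have hpos : 0 < 1 - x := by linarith
  have h1 : HasDerivAt (fun x : ℝ => 1 - x) (-1) x := by
    simpa using (hasDerivAt_id x).const_sub 1
  by_cases h : α = 1
  · simp only [h, if_true]
    refine (h1.log hpos.ne').neg.congr_deriv ?_
    rw [Real.rpow_neg_one]
    field_simp
  · simp only [h, if_false]
    have hne : α - 1 ≠ 0 := sub_ne_zero.mpr h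
    refine ((h1.rpow_const (p := 1 - α) (Or.inl hpos.ne')).div_const (α - 1)).congr_deriv ?_
    rw [show 1 - α - 1 = -α by ring]
    field_simp
    ring

lemma utility_lipschitz (α : ℝ) (hα : 0 ≤ α) (r : ℝ) (hr : r < 1) (u : ℝ → ℝ)
    (hu : u = fun x => if α = 1 then -Real.log (1 - x) else (1 - x) ^ (1 - α) / (α - 1))
    (x y : ℝ) (hx : x ≤ r) (hy : y ≤ r) :
    |u y - u x| ≤ (1 - r) ^ (-α) * |y - x| := by
  subst hu
  refine (convex_Iic r).norm_image_sub_le_of_norm_hasDerivWithin_le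
    (f' := fun x => (1 - x) ^ (-α))
    (fun z hz => (utility_hasDerivAt α z (lt_of_le_of_lt hz hr)).hasDerivWithinAt)
    (fun z hz => ?_) hx hy
  have hz' : z ≤ r := hz
  rw [Real.norm_of_nonneg (Real.rpow_nonneg (by linarith) _)]
  exact Real.rpow_le_rpow_of_nonpos (by linarith) (by linarith) (by linarith)

/-- A function that is `K`-Lipschitz on `(-∞, r]` stays `K`-Lipschitz when continued beyond `r` by
the line of slope `K`. -/
lemma lipschitz_glue_line (u : ℝ → ℝ) (K r : ℝ) (hK : 0 ≤ K)
    (hu : ∀ x y, x ≤ r → y ≤ r → |u y - u x| ≤ K * |y - x|) (x y : ℝ) :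
    |(if y ≤ r then u y else u r + K * (y - r)) - (if x ≤ r then u x else u r + K * (x - r))|
      ≤ K * |y - x| := by
  wlog hxy : x ≤ y generalizing x y
  · have := this y x (le_of_not_ge hxy)
    rwa [abs_sub_comm, abs_sub_comm y x]
  split_ifs with hy hx hx
  · exact hu x y hx hy
  · exact absurd (hxy.trans hy) hx
  · have h := hu x r hx le_rfl
    rw [abs_of_nonneg (sub_nonneg.mpr hx)] at h
    rw [abs_of_nonneg (sub_nonneg.mpr hxy)]
    have hyr : 0 ≤ K * (y - r) := mul_nonneg hK (by linarith)
    rw [abs_le] at h ⊢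
    constructor <;> nlinarith [h.1, h.2]
  · rw [show u r + K * (y - r) - (u r + K * (x - r)) = K * (y - x) by ring, abs_mul,
      abs_of_nonneg hK]

/-- Lipschitz continuity of the penalty-featured cost `V` on the whole feasible set Ω'. -/
theorem penalized_cost_lipschitz
    {I J : Type*} [Fintype I] [Fintype J] [Nonempty I] [Nonempty J]
    (α : ℝ) (hα : 0 ≤ α)
    (lam : I → ℝ) (hlam : ∀ i, 0 ≤ lam i)
    (c : J → I → ℝ) (hc : ∀ j i, 0 < c j i)
    (ρ₀ : ℝ) (hρ₀ : ρ₀ ∈ Set.Ioo (0 : ℝ) 1)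
    -- AP loads
    (ρ : J → (I → J → ℝ) → ℝ)
    (hρ : ρ = fun j p => ∑ i, lam i * p i j / c j i)
    -- the α-fair per-AP utility
    (u : ℝ → ℝ)
    (hu : u = fun x => if α = 1 then -Real.log (1 - x) else (1 - x) ^ (1 - α) / (α - 1))
    -- its tangent-line extension at ρ₀
    (Fα : ℝ → ℝ)
    (hFα : Fα = fun x => if x ≤ ρ₀ then u x else u ρ₀ + (1 - ρ₀) ^ (-α) * (x - ρ₀))
    -- the penalty-featured cost
    (V : (I → J → ℝ) → ℝ)
    (hV : V = fun p => ∑ j, Fα (ρ j p))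
    -- two arbitrary feasible policies, with no load constraint
    (pol pol' : I → J → ℝ)
    (hpol : (∀ i j, 0 ≤ pol i j) ∧ ∀ i, ∑ j, pol i j = 1)
    (hpol' : (∀ i j, 0 ≤ pol' i j) ∧ ∀ i, ∑ j, pol' i j = 1) :
    |V pol - V pol'| ≤
      (1 - ρ₀) ^ (-α) *
        (Finset.univ.sup' Finset.univ_nonempty (fun q : J × I => lam q.2 / c q.1 q.2)) *
        (∑ i, ∑ j, |pol i j - pol' i j|) := by
  have hK : 0 ≤ (1 - ρ₀) ^ (-α) := Real.rpow_nonneg (by linarith [hρ₀.2]) _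
  have hF : ∀ x y, |Fα y - Fα x| ≤ (1 - ρ₀) ^ (-α) * |y - x| := by
    intro x y
    rw [hFα]
    exact lipschitz_glue_line u _ ρ₀ hK (utility_lipschitz α hα ρ₀ hρ₀.2 u hu) x y
  set M := Finset.univ.sup' Finset.univ_nonempty (fun q : J × I => lam q.2 / c q.1 q.2) with hM
  have hMle : ∀ j i, lam i / c j i ≤ M := fun j i =>
    Finset.le_sup' (fun q : J × I => lam q.2 / c q.1 q.2) (Finset.mem_univ (j, i))
  have hload : ∀ j, |ρ j pol - ρ j pol'| ≤ M * ∑ i, |pol i j - pol' i j| := by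
    intro j
    rw [hρ]
    simp only
    rw [← Finset.sum_sub_distrib, Finset.mul_sum]
    refine (Finset.abs_sum_le_sum_abs _ _).trans (Finset.sum_le_sum fun i _ => ?_)
    rw [show lam i * pol i j / c j i - lam i * pol' i j / c j i
      = lam i / c j i * (pol i j - pol' i j) by ring, abs_mul,
      abs_of_nonneg (div_nonneg (hlam i) (hc j i).le)]
    exact mul_le_mul_of_nonneg_right (hMle j i) (abs_nonneg _)
  calc |V pol - V pol'| = |∑ j, (Fα (ρ j pol) - Fα (ρ j pol'))| := by
        rw [hV, Finset.sum_sub_distrib]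
    _ ≤ ∑ j, |Fα (ρ j pol) - Fα (ρ j pol')| := Finset.abs_sum_le_sum_abs _ _
    _ ≤ ∑ j, (1 - ρ₀) ^ (-α) * (M * ∑ i, |pol i j - pol' i j|) :=
        Finset.sum_le_sum fun j _ =>
          (hF _ _).trans (mul_le_mul_of_nonneg_left (hload j) hK)
    _ = (1 - ρ₀) ^ (-α) * M * ∑ i, ∑ j, |pol i j - pol' i j| := by
        rw [Finset.sum_comm (f := fun i j => |pol i j - pol' i j|), ← Finset.mul_sum,
          ← Finset.mul_sum, mul_assoc]
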